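/- Fix integers 1 ≤ k ≤ n and p ∈ [0,1/2]. Sample a uniformly random matrix G ∈ 𝔽₂^{k×n} and let 𝒞 = {mG : m ∈ 𝔽₂^k}. Let f_ber,p be the Bernoulli distribution on 𝔽₂ⁿ, f_ber,p(x) = p^{|x|}(1−p)^{n−|x|}. Then E_G[Δ(u, f_ber,p^𝒞)] ≤ √( (1+(1−2p)²)ⁿ / 2^k ). -/

import Mathlib

open scoped BigOperators
open scoped Classical

attribute [local instance] Fintype.ofFinite

/-- Statistical distance between two functions on a finite set. -/
noncomputable def statDist {S : Type*} [Fintype S] (f g : S → ℝ) : ℝ :=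
  (1 / 2) * ∑ x : S, |f x - g x|

/-- `f^𝒞`, the periodization of `f` over the code `𝒞`. -/
noncomputable def periodize {n : ℕ} (C : Submodule (ZMod 2) (Fin n → ZMod 2))
    (f : (Fin n → ZMod 2) → ℝ) : ((Fin n → ZMod 2) ⧸ C) → ℝ :=
  fun xbar => ∑ y : Fin n → ZMod 2,
    if (Submodule.Quotient.mk y : (Fin n → ZMod 2) ⧸ C) = xbar then f y else 0

/-- The uniform distribution on the quotient `𝔽₂ⁿ/𝒞`. -/
noncomputable def unifQuot {n : ℕ} (C : Submodule (ZMod 2) (Fin n → ZMod 2)) :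
    ((Fin n → ZMod 2) ⧸ C) → ℝ :=
  fun _ => (Nat.card ((Fin n → ZMod 2) ⧸ C) : ℝ)⁻¹

/-- The Bernoulli distribution of parameter `p` on `𝔽₂ⁿ`:
`f_ber,p(x) = p^{|x|} (1−p)^{n−|x|}`. -/
noncomputable def fber (n : ℕ) (p : ℝ) : (Fin n → ZMod 2) → ℝ :=
  fun x => p ^ (hammingNorm x) * (1 - p) ^ (n - hammingNorm x)

/-- The code generated by the matrix `G`, i.e. `{mG : m ∈ 𝔽₂ᵏ}`. -/
def codeOf {n k : ℕ} (G : Matrix (Fin k) (Fin n) (ZMod 2)) :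
    Submodule (ZMod 2) (Fin n → ZMod 2) :=
  LinearMap.range (Matrix.vecMulLinear G)

/-! By Cauchy–Schwarz, the squared distance of a distribution `g` on `N` points to the uniform one
is controlled by its collision probability `∑ g²`. For `g = f^𝒞` this is the probability that two
independent samples of `f` differ by a codeword. Weighting it by `N = 2ⁿ / |𝒞|` makes its average
over `G` computable: `2ⁿ / |𝒞| · 1[w ∈ 𝒞] = 2ⁿ · Pr_m[mG = w]` whatever the rank of `G`, and for
each fixed `m ≠ 0` the word `mG` is uniform. The average is therefore `1 - 2⁻ᵏ` for `w ≠ 0`, and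
equal samples (`w = 0`) contribute the additional main term `2ⁿ⁻ᵏ ∑ f²`. -/

section RandomImage

theorem expect_ite_map_eq {A B : Type*} [AddGroup A] [Fintype A] [AddGroup B] [DecidableEq B]
    (φ : A →+ B) (b : B) :
    𝔼 a, (if φ a = b then (1 : ℝ) else 0) =
      if b ∈ φ.range then (Nat.card φ.range : ℝ)⁻¹ else 0 := by
  have card_fiber : ∑ a, (if φ a = b then (1 : ℝ) else 0) = Nat.card (φ ⁻¹' {b}) := by
    simp only [Finset.sum_boole, Set.preimage, Set.mem_singleton_iff, Set.coe_ofPred,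
      Nat.card_eq_fintype_card, Fintype.card_subtype]
  rw [Fintype.expect_eq_sum_div_card, card_fiber, ← Nat.card_eq_fintype_card]
  split_ifs with hb
  · obtain ⟨a, rfl⟩ := hb
    rw [Nat.card_congr (φ.fiberEquivKer a), ← φ.ker.card_mul_index, AddSubgroup.index_ker,
      Nat.cast_mul, div_mul_cancel_left₀ (by exact_mod_cast Nat.card_pos.ne')]
  · rw [Set.preimage_singleton_eq_empty.mpr hb]
    simp

variable {F ι κ : Type*} [DivisionRing F] [Fintype ι]

theorem vecMul_surjective_of_ne_zero {m : ι → F} (hm : m ≠ 0) :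
    Function.Surjective fun G : Matrix ι κ F => Matrix.vecMul m G := by
  obtain ⟨i, hi⟩ := Function.ne_iff.mp hm
  refine fun v => ⟨Matrix.vecMulVec (Pi.single i (m i)⁻¹) v, ?_⟩
  simp only [Matrix.vecMul_vecMulVec, dotProduct_single, mul_inv_cancel₀ hi, one_smul]

variable [Fintype F] [DecidableEq F] [DecidableEq ι] [Fintype κ] [DecidableEq κ]

theorem expect_ite_vecMul_eq_of_ne_zero {m : ι → F} (hm : m ≠ 0) (w : κ → F) :
    𝔼 G : Matrix ι κ F, (if Matrix.vecMul m G = w then (1 : ℝ) else 0) =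
      (Nat.card (κ → F) : ℝ)⁻¹ := by
  let φ : Matrix ι κ F →+ (κ → F) :=
    AddMonoidHom.mk' (fun G => Matrix.vecMul m G) fun G H => Matrix.vecMul_add G H m
  have hφ : φ.range = ⊤ := AddMonoidHom.range_eq_top.mpr (vecMul_surjective_of_ne_zero hm)
  calc
    _ = if w ∈ φ.range then (Nat.card φ.range : ℝ)⁻¹ else 0 := expect_ite_map_eq φ w
    _ = (Nat.card (κ → F) : ℝ)⁻¹ := by
      rw [if_pos (hφ ▸ AddSubgroup.mem_top w), hφ, AddSubgroup.card_top]

theorem expect_expect_ite_vecMul_eq (w : κ → F) :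
    𝔼 G : Matrix ι κ F, 𝔼 m : ι → F, (if Matrix.vecMul m G = w then (1 : ℝ) else 0) =
      (if w = 0 then 1 else 0) / Nat.card (ι → F) +
        (1 - 1 / Nat.card (ι → F)) / Nat.card (κ → F) := by
  have hcard : (Nat.card (ι → F) : ℝ) ≠ 0 := by exact_mod_cast Nat.card_pos.ne'
  have hzero : 𝔼 G : Matrix ι κ F, (if Matrix.vecMul 0 G = w then (1 : ℝ) else 0) =
      if w = 0 then 1 else 0 := by
    simp only [Matrix.zero_vecMul, Fintype.expect_const, eq_comm (a := (0 : κ → F))]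
  calc
    _ = 𝔼 m : ι → F, 𝔼 G : Matrix ι κ F, (if Matrix.vecMul m G = w then (1 : ℝ) else 0) :=
      Finset.expect_comm ..
    _ = ((if w = 0 then 1 else 0) +
          ∑ _m ∈ Finset.univ.erase (0 : ι → F), (Nat.card (κ → F) : ℝ)⁻¹) / Nat.card (ι → F) := by
      rw [Fintype.expect_eq_sum_div_card, ← Nat.card_eq_fintype_card,
        ← Finset.add_sum_erase _ _ (Finset.mem_univ 0), hzero]
      congr 2
      exact Finset.sum_congr rfl fun m hm =>
        expect_ite_vecMul_eq_of_ne_zero (Finset.ne_of_mem_erase hm) w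
    _ = _ := by
      rw [Finset.sum_const, nsmul_eq_mul, Finset.cast_card_erase_of_mem (Finset.mem_univ _),
        Finset.card_univ, ← Nat.card_eq_fintype_card]
      field_simp

end RandomImage

theorem sq_expect_le_expect_sq {ι K : Type*} [Fintype ι] [Field K] [LinearOrder K]
    [IsStrictOrderedRing K] (f : ι → K) :
    (𝔼 i, f i) ^ 2 ≤ 𝔼 i, f i ^ 2 := by
  simp only [Fintype.expect_eq_sum_div_card]
  exact sum_div_card_sq_le_sum_sq_div_card

theorem statDist_uniform_sq_le {S : Type*} [Fintype S] (g : S → ℝ) (hg : ∑ x, g x = 1) :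
    statDist (fun _ => (Nat.card S : ℝ)⁻¹) g ^ 2 ≤ (Nat.card S * ∑ x, g x ^ 2 - 1) / 4 := by
  have hS : Nonempty S := Finset.univ_nonempty_iff.mp
    (Finset.nonempty_of_sum_ne_zero (hg.trans_ne one_ne_zero))
  have hcard : (Nat.card S : ℝ) ≠ 0 := by exact_mod_cast Nat.card_pos.ne'
  have variance : (Nat.card S : ℝ) * ∑ x, ((Nat.card S : ℝ)⁻¹ - g x) ^ 2 =
      Nat.card S * ∑ x, g x ^ 2 - 1 := by
    simp only [sub_sq, Finset.sum_add_distrib, Finset.sum_sub_distrib, ← Finset.mul_sum, hg,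
      Finset.sum_const, Finset.card_univ, ← Nat.card_eq_fintype_card, nsmul_eq_mul]
    field_simp
    ring
  calc statDist (fun _ => (Nat.card S : ℝ)⁻¹) g ^ 2
      = (∑ x, |(Nat.card S : ℝ)⁻¹ - g x|) ^ 2 / 4 := by rw [statDist]; ring
    _ ≤ (Nat.card S * ∑ x, |(Nat.card S : ℝ)⁻¹ - g x| ^ 2) / 4 := by
      rw [Nat.card_eq_fintype_card]
      gcongr
      exact sq_sum_le_card_mul_sum_sq
    _ = (Nat.card S * ∑ x, g x ^ 2 - 1) / 4 := by simp only [sq_abs, variance]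

section Periodize

variable {n : ℕ} (C : Submodule (ZMod 2) (Fin n → ZMod 2)) (f : (Fin n → ZMod 2) → ℝ)

theorem sum_periodize : ∑ x, periodize C f x = ∑ y, f y := by
  simp only [periodize]
  rw [Finset.sum_comm]
  simp only [Finset.sum_ite_eq, Finset.mem_univ, if_true]

theorem sum_periodize_sq :
    ∑ x, periodize C f x ^ 2 = ∑ y, ∑ z, f y * f z * if y - z ∈ C then 1 else 0 := by
  calc ∑ x, periodize C f x ^ 2
      = ∑ y, ∑ x, (if Submodule.Quotient.mk y = x then f y * periodize C f x else 0) := by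
        rw [Finset.sum_comm]
        refine Finset.sum_congr rfl fun x _ => ?_
        simp only [sq, periodize, Finset.sum_mul, ite_mul, zero_mul]
    _ = ∑ y, f y * periodize C f (Submodule.Quotient.mk y) := by
        simp only [Finset.sum_ite_eq, Finset.mem_univ, if_true]
    _ = ∑ y, ∑ z, f y * f z * if y - z ∈ C then 1 else 0 := by
        refine Finset.sum_congr rfl fun y _ => ?_
        rw [periodize, Finset.mul_sum]
        refine Finset.sum_congr rfl fun z _ => ?_
        simp only [eq_comm (b := (Submodule.Quotient.mk y : _ ⧸ C)), Submodule.Quotient.eq,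
          mul_ite, mul_one, mul_zero]

end Periodize

section RandomCode

variable {n : ℕ} (k : ℕ)

theorem card_fin_fun_zmod_two (n : ℕ) : (Nat.card (Fin n → ZMod 2) : ℝ) = 2 ^ n := by
  simp

theorem card_matrix_zmod_two (k n : ℕ) :
    (Fintype.card (Matrix (Fin k) (Fin n) (ZMod 2)) : ℝ) = 2 ^ (k * n) := by
  rw [← Nat.card_eq_fintype_card, mul_comm, pow_mul]
  simp [Matrix]

theorem card_quotient_codeOf_mul_ite_mem {k : ℕ} (G : Matrix (Fin k) (Fin n) (ZMod 2))
    (w : Fin n → ZMod 2) :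
    (Nat.card ((Fin n → ZMod 2) ⧸ codeOf G) : ℝ) * (if w ∈ codeOf G then 1 else 0) =
      2 ^ n * 𝔼 m : Fin k → ZMod 2, if Matrix.vecMul m G = w then (1 : ℝ) else 0 := by
  have hexpect : 𝔼 m : Fin k → ZMod 2, (if Matrix.vecMul m G = w then (1 : ℝ) else 0) =
      if w ∈ codeOf G then (Nat.card (codeOf G) : ℝ)⁻¹ else 0 := by
    convert expect_ite_map_eq (Matrix.vecMulLinear G).toAddMonoidHom w <;> rfl
  have hcard : (Nat.card (codeOf G) : ℝ) ≠ 0 := by exact_mod_cast Nat.card_pos.ne'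
  rw [hexpect, ← card_fin_fun_zmod_two, Submodule.card_eq_card_quotient_mul_card (codeOf G),
    Nat.cast_mul]
  split_ifs
  · field_simp
  · simp only [mul_zero]

theorem expect_card_quotient_codeOf_mul_ite_mem (w : Fin n → ZMod 2) :
    𝔼 G : Matrix (Fin k) (Fin n) (ZMod 2),
        (Nat.card ((Fin n → ZMod 2) ⧸ codeOf G) : ℝ) * (if w ∈ codeOf G then 1 else 0) =
      2 ^ n / 2 ^ k * (if w = 0 then 1 else 0) + (1 - 1 / 2 ^ k) := by
  simp only [card_quotient_codeOf_mul_ite_mem, ← Finset.mul_expect, expect_expect_ite_vecMul_eq,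
    card_fin_fun_zmod_two]
  field_simp

theorem expect_card_quotient_mul_sum_periodize_sq (f : (Fin n → ZMod 2) → ℝ) :
    𝔼 G : Matrix (Fin k) (Fin n) (ZMod 2),
        (Nat.card ((Fin n → ZMod 2) ⧸ codeOf G) : ℝ) * ∑ x, periodize (codeOf G) f x ^ 2 =
      2 ^ n / 2 ^ k * ∑ y, f y ^ 2 + (1 - 1 / 2 ^ k) * (∑ y, f y) ^ 2 := by
  calc
    _ = ∑ y, ∑ z, f y * f z * 𝔼 G : Matrix (Fin k) (Fin n) (ZMod 2),
          (Nat.card ((Fin n → ZMod 2) ⧸ codeOf G) : ℝ) *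
            (if y - z ∈ codeOf G then 1 else 0) := by
      simp only [sum_periodize_sq, Finset.mul_sum, Finset.mul_expect, Finset.expect_sum_comm,
        mul_left_comm (Nat.card _ : ℝ)]
    _ = ∑ y, ∑ z, (2 ^ n / 2 ^ k * (if y = z then f y * f z else 0) +
          (1 - 1 / 2 ^ k) * (f y * f z)) := by
      refine Finset.sum_congr rfl fun y _ => Finset.sum_congr rfl fun z _ => ?_
      simp only [expect_card_quotient_codeOf_mul_ite_mem, sub_eq_zero]
      split_ifs <;> ring
    _ = 2 ^ n / 2 ^ k * ∑ y, f y ^ 2 + (1 - 1 / 2 ^ k) * (∑ y, f y) ^ 2 := by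
      simp only [Finset.sum_add_distrib, ← Finset.mul_sum, Finset.sum_ite_eq, Finset.mem_univ,
        if_true, sq, Finset.sum_mul]

variable {f : (Fin n → ZMod 2) → ℝ}

theorem expect_statDist_sq_random_code_le (hf : ∑ y, f y = 1) :
    𝔼 G : Matrix (Fin k) (Fin n) (ZMod 2),
        statDist (unifQuot (codeOf G)) (periodize (codeOf G) f) ^ 2 ≤
      (2 ^ n * ∑ y, f y ^ 2 - 1) / 2 ^ k / 4 := by
  calc
    _ ≤ 𝔼 G : Matrix (Fin k) (Fin n) (ZMod 2),
          ((Nat.card ((Fin n → ZMod 2) ⧸ codeOf G) : ℝ) *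
            ∑ x, periodize (codeOf G) f x ^ 2 - 1) / 4 :=
      Finset.expect_le_expect fun G _ =>
        statDist_uniform_sq_le _ ((sum_periodize (codeOf G) f).trans hf)
    _ = (2 ^ n * ∑ y, f y ^ 2 - 1) / 2 ^ k / 4 := by
      rw [← Finset.expect_div, Finset.expect_sub_distrib,
        expect_card_quotient_mul_sum_periodize_sq, hf, Fintype.expect_const]
      ring

theorem expect_statDist_random_code_le (hf : ∑ y, f y = 1) :
    𝔼 G : Matrix (Fin k) (Fin n) (ZMod 2),
        statDist (unifQuot (codeOf G)) (periodize (codeOf G) f) ≤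
      √((2 ^ n * ∑ y, f y ^ 2 - 1) / 2 ^ k) / 2 := by
  calc
    _ ≤ √((2 ^ n * ∑ y, f y ^ 2 - 1) / 2 ^ k / 4) :=
      Real.le_sqrt_of_sq_le <|
        (sq_expect_le_expect_sq _).trans (expect_statDist_sq_random_code_le k hf)
    _ = √((2 ^ n * ∑ y, f y ^ 2 - 1) / 2 ^ k) / 2 := by
      rw [Real.sqrt_div' _ zero_le_four, show √(4 : ℝ) = 2 by norm_num]

end RandomCode

section Bernoulli

theorem fber_eq_prod (n : ℕ) (p : ℝ) (x : Fin n → ZMod 2) :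
    fber n p x = ∏ i, if x i = 0 then 1 - p else p := by
  have hzeros : (Finset.univ.filter fun i => x i = 0).card = n - hammingNorm x := by
    have hcard := Finset.card_filter_add_card_filter_not (s := Finset.univ) fun i => x i = 0
    rw [Finset.card_fin] at hcard
    exact Nat.eq_sub_of_add_eq hcard
  rw [Finset.prod_ite, Finset.prod_const, Finset.prod_const, hzeros, mul_comm]
  rfl

theorem sum_fber_pow (n : ℕ) (p : ℝ) (r : ℕ) :
    ∑ x, fber n p x ^ r = ((1 - p) ^ r + p ^ r) ^ n := by
  calc ∑ x, fber n p x ^ r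
      = ∑ x : Fin n → ZMod 2, ∏ i, (if x i = 0 then 1 - p else p) ^ r := by
        simp only [fber_eq_prod, Finset.prod_pow]
    _ = (∑ a : ZMod 2, (if a = 0 then 1 - p else p) ^ r) ^ n :=
        (Fintype.sum_pow (fun a : ZMod 2 => (if a = 0 then 1 - p else p) ^ r) n).symm
    _ = ((1 - p) ^ r + p ^ r) ^ n := by
        congr 1
        exact Fin.sum_univ_two fun a : ZMod 2 => (if a = 0 then 1 - p else p) ^ r

end Bernoulli

theorem expected_statDist_bernoulli_random_code_general (n k : ℕ) (p : ℝ) :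
    (∑ G : Matrix (Fin k) (Fin n) (ZMod 2),
        statDist (unifQuot (codeOf G)) (periodize (codeOf G) (fber n p))) /
        (2 : ℝ) ^ (k * n) ≤
      √(((1 + (1 - 2 * p) ^ 2) ^ n - 1) / 2 ^ k) / 2 := by
  have hsum : ∑ x, fber n p x = 1 := by simpa using sum_fber_pow n p 1
  have hcollision : 2 ^ n * ∑ x, fber n p x ^ 2 = (1 + (1 - 2 * p) ^ 2) ^ n := by
    rw [sum_fber_pow, ← mul_pow]
    ring
  simpa only [Fintype.expect_eq_sum_div_card, card_matrix_zmod_two, hcollision]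
    using expect_statDist_random_code_le k hsum

/-- For `1 ≤ k ≤ n` and `p ∈ [0,1/2]`, the expectation over a uniform `G ∈ 𝔽₂^{k×n}` of
`Δ(u, f_ber,p^𝒞)`, where `𝒞` is the code generated by `G`, is at most
`√((1+(1−2p)²)ⁿ/2^k)`. -/
theorem expected_statDist_bernoulli_random_code {n k : ℕ} (hk1 : 1 ≤ k) (hkn : k ≤ n)
    (p : ℝ) (hp : p ∈ Set.Icc (0 : ℝ) (1 / 2)) :
    (∑ G : Matrix (Fin k) (Fin n) (ZMod 2),
        statDist (unifQuot (codeOf G)) (periodize (codeOf G) (fber n p))) /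
        (2 : ℝ) ^ (k * n) ≤
      Real.sqrt ((1 + (1 - 2 * p) ^ 2) ^ n / (2 : ℝ) ^ k) := by
  refine (expected_statDist_bernoulli_random_code_general n k p).trans ?_
  refine (half_le_self (Real.sqrt_nonneg _)).trans (Real.sqrt_le_sqrt ?_)
  exact div_le_div_of_nonneg_right (sub_le_self _ zero_le_one) (by positivity)
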